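/- arXiv:2103.07498 — 2 statements merged into one kernel-verified Lean document; each statement's English description precedes it below -/
import Mathlib

section
/- There exists a constant C > 0 such that for every integer n ≥ 1, the variance of the number of descents of a uniformly random involution of S_n is at most C·n; equivalently, Σ_{π ∈ S_n, π² = id} (des(π) − (n−1)/2)² ≤ C · n · i_n. -/
open Finset

/-- The number of descents of a permutation of `Fin n`:
positions `i` with `i+1 < n` and `π(i) > π(i+1)`. -/
def descents {n : ℕ} (π : Equiv.Perm (Fin n)) : ℕ :=
  (Finset.univ.filter fun i : Fin n =>
    ∃ h : (i : ℕ) + 1 < n, π ⟨(i : ℕ) + 1, h⟩ < π i).card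

/-- The involutions of the symmetric group `S_n`. -/
def involutions (n : ℕ) : Finset (Equiv.Perm (Fin n)) :=
  Finset.univ.filter fun π => π * π = 1

lemma swap_lt_iff {m : ℕ} (i : Fin m) (x y : Fin (m+1)) 
    (h1 : ¬ (x = i.castSucc ∧ y = i.succ)) (h2 : ¬ (x = i.succ ∧ y = i.castSucc)) :
    (Equiv.swap i.castSucc i.succ x < Equiv.swap i.castSucc i.succ y) ↔ x < y := by
  simp only [Equiv.swap_apply_def]
  have ha : (i.castSucc : Fin (m+1)).val = i.val := rfl
  have hb : (i.succ : Fin (m+1)).val = i.val + 1 := rfl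
  simp only [Fin.ext_iff, ha, hb] at h1 h2
  split_ifs <;> simp only [Fin.ext_iff, Fin.lt_def, ha, hb] at * <;> omega

def descY {m : ℕ} (i : Fin m) (π : Equiv.Perm (Fin (m+1))) : ℝ :=
  if π i.succ < π i.castSucc then 1 else -1

def conjSw {m : ℕ} (i : Fin m) (π : Equiv.Perm (Fin (m+1))) : Equiv.Perm (Fin (m+1)) :=
  Equiv.swap i.castSucc i.succ * π * Equiv.swap i.castSucc i.succ

def badW {m : ℕ} (i j : Fin m) (π : Equiv.Perm (Fin (m+1))) : ℝ :=
  ((if j = i then 1 else 0) + (if j.val + 1 = i.val then 1 else 0)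
    + (if j.val = i.val + 1 then 1 else 0)) +
  ((if π i.castSucc = i.succ then 1 else 0)
    + (if π i.castSucc = i.castSucc ∧ π i.succ = i.succ then 1 else 0)) +
  ((if π j.castSucc = i.castSucc then 1 else 0) + (if π j.castSucc = i.succ then 1 else 0))

lemma descY_le {m : ℕ} (i j : Fin m) (π : Equiv.Perm (Fin (m+1))) :
    descY i π * descY j π ≤ 1 := by
  unfold descY; split_ifs <;> norm_num

lemma badW_nonneg {m : ℕ} (i j : Fin m) (π : Equiv.Perm (Fin (m+1))) : 0 ≤ badW i j π := by
  unfold badW; positivity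

lemma pointwise {m : ℕ} (i j : Fin m) (π : Equiv.Perm (Fin (m+1))) (hπ : π * π = 1) :
    descY i π * descY j π + descY i (conjSw i π) * descY j (conjSw i π) ≤ 2 * badW i j π := by
  by_cases hb : 1 ≤ badW i j π
  · linarith [descY_le i j π, descY_le i j (conjSw i π)]
  have h0 := badW_nonneg i j π
  have key : (j ≠ i) ∧ (j.val + 1 ≠ i.val) ∧ (j.val ≠ i.val + 1) ∧ (π i.castSucc ≠ i.succ) ∧
     ¬ (π i.castSucc = i.castSucc ∧ π i.succ = i.succ) ∧ π j.castSucc ≠ i.castSucc ∧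
      π j.castSucc ≠ i.succ := by
    refine ⟨?_, ?_, ?_, ?_, ?_, ?_, ?_⟩ <;> intro h <;> apply hb <;> unfold badW <;>
      rw [if_pos h] <;> 
      (have : ∀ (p : Prop) [Decidable p], (0:ℝ) ≤ if p then 1 else 0 := by
        intro p _; positivity
       linarith [this (j = i), this (j.val + 1 = i.val), this (j.val = i.val + 1),
        this (π i.castSucc = i.succ), this (π i.castSucc = i.castSucc ∧ π i.succ = i.succ),
        this (π j.castSucc = i.castSucc), this (π j.castSucc = i.succ)])
  obtain ⟨k1, k2, k3, k4, k5, k6, k7⟩ := key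
  have k1' : j.val ≠ i.val := fun h => k1 (Fin.ext h)
  have e1 : descY i (conjSw i π) = - descY i π := by
    have hne : π i.castSucc ≠ π i.succ := fun h => by
      have := π.injective h
      simp [Fin.ext_iff] at this
    unfold descY conjSw
    simp only [Equiv.Perm.mul_apply, Equiv.swap_apply_left, Equiv.swap_apply_right]
    simp only [swap_lt_iff i _ _ k5 (fun h => k4 h.1)]
    rcases lt_or_gt_of_ne hne with h | h
    · rw [if_pos h, if_neg h.not_gt]; norm_num
    · rw [if_neg h.not_gt, if_pos h]
  have e2 : descY j (conjSw i π) = descY j π := by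
    have s1 : Equiv.swap i.castSucc i.succ j.castSucc = j.castSucc := by
      apply Equiv.swap_apply_of_ne_of_ne <;> simp [Fin.ext_iff] <;> omega
    have s2 : Equiv.swap i.castSucc i.succ j.succ = j.succ := by
      apply Equiv.swap_apply_of_ne_of_ne <;> simp [Fin.ext_iff] <;> omega
    unfold descY conjSw
    simp only [Equiv.Perm.mul_apply, s1, s2]
    simp only [swap_lt_iff i _ _ (fun h => k7 h.2) (fun h => k6 h.2)]
  rw [e1, e2]; linarith

lemma mem_invol {n : ℕ} (π : Equiv.Perm (Fin n)) : π ∈ involutions n ↔ π * π = 1 := by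
  simp [involutions]

lemma conj_mem {n : ℕ} (a b : Fin n) (π : Equiv.Perm (Fin n)) (h : π ∈ involutions n) :
    Equiv.swap a b * π * Equiv.swap a b ∈ involutions n := by
  rw [mem_invol] at *
  calc _ = Equiv.swap a b * π * (Equiv.swap a b * Equiv.swap a b) * π * Equiv.swap a b := by group
    _ = Equiv.swap a b * (π * π) * Equiv.swap a b := by rw [Equiv.swap_mul_self]; group
    _ = 1 := by rw [h]; simp

lemma conj_conj {n : ℕ} (a b : Fin n) (π : Equiv.Perm (Fin n)) :
    Equiv.swap a b * (Equiv.swap a b * π * Equiv.swap a b) * Equiv.swap a b = π := by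
  calc _ = (Equiv.swap a b * Equiv.swap a b) * π * (Equiv.swap a b * Equiv.swap a b) := by group
    _ = π := by simp

lemma pair_le {m : ℕ} (i j : Fin m) :
    ∑ π ∈ involutions (m+1), descY i π * descY j π ≤ ∑ π ∈ involutions (m+1), badW i j π := by
  have h1 : ∑ π ∈ involutions (m+1), descY i (conjSw i π) * descY j (conjSw i π)
      = ∑ π ∈ involutions (m+1), descY i π * descY j π := by
    apply Finset.sum_nbij' (conjSw i) (conjSw i)
    · exact fun π h => conj_mem _ _ π h
    · exact fun π h => conj_mem _ _ π h
    · exact fun π h => conj_conj _ _ π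
    · exact fun π h => conj_conj _ _ π
    · exact fun π h => rfl
  have h2 := Finset.sum_le_sum (fun π hπ => pointwise i j π ((mem_invol π).1 hπ))
  rw [Finset.sum_add_distrib, h1, ← Finset.mul_sum] at h2
  linarith

lemma card_k {n : ℕ} (a b k : Fin n) (hb : b ≠ a) (hk : k ≠ a) :
    ((involutions n).filter fun π => π a = b).card ≤
    ((involutions n).filter fun π => π a = k).card := by
  apply Finset.card_le_card_of_injOn (fun π => Equiv.swap b k * π * Equiv.swap b k)
  · intro π h
    simp only [coe_filter, Set.mem_setOf_eq] at h ⊢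
    refine ⟨conj_mem _ _ π h.1, ?_⟩
    simp [Equiv.swap_apply_of_ne_of_ne hb.symm hk.symm, h.2]
  · intro π _ τ _ h
    have := congrArg (fun x => Equiv.swap b k * x * Equiv.swap b k) h
    simpa only [conj_conj] using this

lemma card_swapped {m : ℕ} (i : Fin m) :
    m * ((involutions (m+1)).filter fun π => π i.castSucc = i.succ).card
      ≤ (involutions (m+1)).card := by
  have h := Finset.card_eq_sum_card_fiberwise (s := involutions (m+1)) (t := Finset.univ)
    (f := fun π => π i.castSucc) (fun _ _ => by simp)
  rw [h]
  calc _ = ∑ k ∈ Finset.univ.erase i.castSucc,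
      ((involutions (m+1)).filter fun π => π i.castSucc = i.succ).card := by
        rw [Finset.sum_const, Finset.card_erase_of_mem (Finset.mem_univ _)]; simp
    _ ≤ ∑ k ∈ Finset.univ.erase i.castSucc,
      ((involutions (m+1)).filter fun π => π i.castSucc = k).card := by
        apply Finset.sum_le_sum
        intro k hk
        apply card_k
        · simp [Fin.ext_iff]
        · exact Finset.ne_of_mem_erase hk
    _ ≤ _ := Finset.sum_le_sum_of_subset (Finset.subset_univ _)

lemma card_fixed {m : ℕ} (i : Fin m) :
    ((involutions (m+1)).filter fun π => π i.castSucc = i.castSucc ∧ π i.succ = i.succ).card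
     ≤ ((involutions (m+1)).filter fun π => π i.castSucc = i.succ).card := by
  apply Finset.card_le_card_of_injOn (fun π => Equiv.swap i.castSucc i.succ * π)
  · intro π h
    simp only [coe_filter, Set.mem_setOf_eq, mem_invol] at h ⊢
    obtain ⟨h0, h1, h2⟩ := h
    have hc : π * Equiv.swap i.castSucc i.succ = Equiv.swap i.castSucc i.succ * π := by
      rw [Equiv.mul_swap_eq_swap_mul, h1, h2]
    refine ⟨?_, ?_⟩
    · calc _ = Equiv.swap i.castSucc i.succ * (π * Equiv.swap i.castSucc i.succ) * π := by group
        _ = (Equiv.swap i.castSucc i.succ * Equiv.swap i.castSucc i.succ) * (π * π) := by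
            rw [hc]; group
        _ = 1 := by rw [h0]; simp
    · simp [h1]
  · intro π _ τ _ h
    exact mul_left_cancel h

lemma sum_ind_le {m : ℕ} (p : Fin m → Prop) [DecidablePred p]
    (h : ∀ x y, p x → p y → x = y) : ∑ j : Fin m, (if p j then (1:ℝ) else 0) ≤ 1 := by
  rw [Finset.sum_boole]
  have : (Finset.univ.filter p).card ≤ 1 := by
    rw [Finset.card_le_one]
    intro x hx y hy
    exact h x y (by simpa using hx) (by simpa using hy)
  exact_mod_cast this

lemma row_le {m : ℕ} (i : Fin m) :
    ∑ j : Fin m, ∑ π ∈ involutions (m+1), badW i j π ≤ 7 * (involutions (m+1)).card := by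
  rw [Finset.sum_comm]
  have hp : ∀ π ∈ involutions (m+1), ∑ j : Fin m, badW i j π ≤ 5 + 
     ((m:ℝ) * (if π i.castSucc = i.succ then 1 else 0)
    + m * (if π i.castSucc = i.castSucc ∧ π i.succ = i.succ then 1 else 0)) := by
    intro π _
    unfold badW
    simp only [Finset.sum_add_distrib, Finset.sum_const, Finset.card_univ, Fintype.card_fin,
      nsmul_eq_mul]
    have a1 := sum_ind_le (fun j : Fin m => j = i) (fun x y hx hy => hx.trans hy.symm)
    have a2 := sum_ind_le (fun j : Fin m => j.val + 1 = i.val)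
      (fun x y hx hy => Fin.ext (by omega))
    have a3 := sum_ind_le (fun j : Fin m => j.val = i.val + 1)
      (fun x y hx hy => Fin.ext (by omega))
    have a4 := sum_ind_le (fun j : Fin m => π j.castSucc = i.castSucc)
      (fun x y hx hy => Fin.castSucc_injective m (π.injective (hx.trans hy.symm)))
    have a5 := sum_ind_le (fun j : Fin m => π j.castSucc = i.succ)
      (fun x y hx hy => Fin.castSucc_injective m (π.injective (hx.trans hy.symm)))
    linarith
  refine (Finset.sum_le_sum hp).trans ?_
  rw [Finset.sum_add_distrib, Finset.sum_add_distrib, ← Finset.mul_sum, ← Finset.mul_sum,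
    Finset.sum_boole, Finset.sum_boole, Finset.sum_const, nsmul_eq_mul]
  have b1 : (m:ℝ) * ((involutions (m+1)).filter fun π => π i.castSucc = i.succ).card
      ≤ (involutions (m+1)).card := by exact_mod_cast card_swapped i
  have b2 : (m:ℝ) * ((involutions (m+1)).filter
      fun π => π i.castSucc = i.castSucc ∧ π i.succ = i.succ).card
      ≤ (involutions (m+1)).card := by
    exact_mod_cast (Nat.mul_le_mul_left m (card_fixed i)).trans (card_swapped i)
  linarith

lemma descents_eq {m : ℕ} (π : Equiv.Perm (Fin (m+1))) :
    (descents π : ℝ) - (((m+1 : ℕ) : ℝ) - 1) / 2 = (∑ i : Fin m, descY i π) / 2 := by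
  have h1 : (descents π : ℝ) = ∑ i : Fin m, (if π i.succ < π i.castSucc then (1:ℝ) else 0) := by
    unfold descents
    rw [← Finset.sum_boole, Fin.sum_univ_castSucc]
    rw [if_neg (by rintro ⟨h, _⟩; simp at h), add_zero]
    refine Finset.sum_congr rfl fun i _ => ?_
    refine if_congr ?_ rfl rfl
    constructor
    · rintro ⟨_, h⟩; exact h
    · intro h; exact ⟨by simp, h⟩
  have h2 : ∀ i : Fin m, descY i π = 2 * (if π i.succ < π i.castSucc then (1:ℝ) else 0) - 1 := by
    intro i; unfold descY; split_ifs <;> norm_num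
  simp only [h2, Finset.sum_sub_distrib, ← Finset.mul_sum, h1]
  simp
  ring

/-- The variance of the number of descents of a random involution of `S_n` is `O(n)`. -/
theorem var_descents_involutions_le :
    ∃ C : ℝ, 0 < C ∧ ∀ n : ℕ, 1 ≤ n →
      ∑ π ∈ involutions n, ((descents π : ℝ) - ((n : ℝ) - 1) / 2) ^ 2 ≤
        C * n * (involutions n).card := by
  refine ⟨2, by norm_num, ?_⟩
  intro n hn
  obtain ⟨m, rfl⟩ : ∃ m, n = m + 1 := ⟨n - 1, by omega⟩
  have e : ∑ π ∈ involutions (m+1), ((descents π : ℝ) - (((m+1 : ℕ) : ℝ) - 1) / 2) ^ 2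
      = (∑ i : Fin m, ∑ j : Fin m, ∑ π ∈ involutions (m+1), descY i π * descY j π) / 4 := by
    have : ∀ i : Fin m, ∑ j : Fin m, ∑ π ∈ involutions (m+1), descY i π * descY j π
      = ∑ π ∈ involutions (m+1), ∑ j : Fin m, descY i π * descY j π := fun i => Finset.sum_comm
    simp only [this]
    rw [Finset.sum_comm, Finset.sum_div]
    refine Finset.sum_congr rfl fun π _ => ?_
    rw [descents_eq, ← Finset.sum_mul_sum]
    ring
  rw [e]
  have h : ∑ i : Fin m, ∑ j : Fin m, ∑ π ∈ involutions (m+1), descY i π * descY j π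
      ≤ ∑ i : Fin m, 7 * ((involutions (m+1)).card : ℝ) :=
    Finset.sum_le_sum fun i _ => (Finset.sum_le_sum fun j _ => pair_le i j).trans (row_le i)
  rw [Finset.sum_const, Finset.card_univ, Fintype.card_fin, nsmul_eq_mul] at h
  push_cast
  have hc : (0:ℝ) ≤ (involutions (m+1)).card := by positivity
  have hmc : (0:ℝ) ≤ m * (involutions (m+1)).card := by positivity
  nlinarith
end

section
/- For every integer n ≥ 2, Σ_k k · D_{n,k} = (n−1)² · d_{n−2} + (n−1) · Σ_k k · D_{n−1,k}, where D_{m,k} is the number of derangements of {1,…,m} with exactly k descents and d_m is the total number of derangements of {1,…,m} (with d_0 = 1). -/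
open Finset

/-- The derangements of the symmetric group `S_n`. -/
def derangementSet (n : ℕ) : Finset (Equiv.Perm (Fin n)) :=
  Finset.univ.filter fun π => ∀ i, π i ≠ i

/-- `D_{n,k}`: the number of derangements of `{1,…,n}` with exactly `k` descents. -/
def derDesNat (n k : ℕ) : ℕ :=
  ((derangementSet n).filter fun π => descents π = k).card

theorem mem_der {n : ℕ} (π : Equiv.Perm (Fin n)) : π ∈ derangementSet n ↔ ∀ i, π i ≠ i := by
  simp [derangementSet]

theorem card_der (n : ℕ) : (derangementSet n).card = numDerangements n := by
  rw [← card_derangements_fin_eq_numDerangements, ← Set.toFinset_card]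
  congr 1
  ext π
  rw [Set.mem_toFinset, mem_der]
  rfl

theorem card_X (n : ℕ) (i j : Fin (n+2)) (hij : i ≠ j) :
    ((derangementSet (n+2)).filter fun π => π i = j ∧ π j = i).card = numDerangements n := by
  classical
  have h1 : Fintype.card (derangements {a : Fin (n+2) // a ≠ i ∧ a ≠ j}) = numDerangements n := by
    rw [card_derangements_eq_numDerangements]
    congr 1
    rw [Fintype.card_subtype]
    have : (Finset.univ.filter fun a : Fin (n+2) => a ≠ i ∧ a ≠ j) = {i, j}ᶜ := by
      ext a; simp
    rw [this, Finset.card_compl, Finset.card_pair hij]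
    simp
  rw [← h1, Fintype.card_congr (derangements.subtypeEquiv _), Fintype.card_subtype]
  refine Finset.card_bij' (fun π _ => Equiv.swap i j * π) (fun π _ => Equiv.swap i j * π) ?_ ?_ ?_ ?_
  · intro π hπ
    simp only [mem_filter, mem_der] at hπ
    obtain ⟨hd, hi, hj⟩ := hπ
    simp only [mem_filter, mem_univ, true_and, Function.mem_fixedPoints, Function.IsFixedPt,
      Equiv.Perm.mul_apply]
    intro a
    have := hd a
    have e1 : π a = i ↔ a = j := by rw [← hj]; exact π.injective.eq_iff
    have e2 : π a = j ↔ a = i := by rw [← hi]; exact π.injective.eq_iff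
    rw [Equiv.swap_apply_def]
    grind
  · intro π hπ
    simp only [mem_filter, mem_univ, true_and, Function.mem_fixedPoints, Function.IsFixedPt] at hπ
    have hi := (hπ i).1 (by simp)
    have hj := (hπ j).1 (by simp)
    simp only [mem_filter, mem_der, Equiv.Perm.mul_apply]
    refine ⟨?_, by simp [hi], by simp [hj]⟩
    intro a
    have := hπ a
    have e1 : π a = i ↔ a = i := ⟨fun h => π.injective (h.trans hi.symm), fun h => by rw [h, hi]⟩
    have e2 : π a = j ↔ a = j := ⟨fun h => π.injective (h.trans hj.symm), fun h => by rw [h, hj]⟩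
    rw [Equiv.swap_apply_def]
    grind
  · intro π _; ext a; simp
  · intro π _; ext a; simp

/-- The involution. -/
def Phi {n : ℕ} (i j : Fin n) (π : Equiv.Perm (Fin n)) : Equiv.Perm (Fin n) :=
  if π i = j ∨ π j = i then Equiv.swap i j * π * Equiv.swap i j else π * Equiv.swap i j

theorem Phi_Phi {n : ℕ} (i j : Fin n) (π : Equiv.Perm (Fin n)) (hπ : π ∈ derangementSet n) :
    Phi i j (Phi i j π) = π := by
  rw [mem_der] at hπ
  have hi := hπ i
  have hj := hπ j
  by_cases h : π i = j ∨ π j = i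
  · have h' : (Equiv.swap i j * π * Equiv.swap i j) i = j ∨
        (Equiv.swap i j * π * Equiv.swap i j) j = i := by
      rcases h with h | h
      · right; simp [h]
      · left; simp [h]
    rw [Phi, Phi, if_pos h, if_pos h']
    ext a; simp
  · have h' : ¬ ((π * Equiv.swap i j) i = j ∨ (π * Equiv.swap i j) j = i) := by
      simp [hi, hj]
    rw [Phi, Phi, if_neg h, if_neg h']
    ext a; simp

theorem Phi_mem {n : ℕ} (i j : Fin n) (π : Equiv.Perm (Fin n)) (hπ : π ∈ derangementSet n) :
    Phi i j π ∈ derangementSet n := by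
  rw [mem_der] at *
  intro a
  unfold Phi
  split_ifs with h
  · intro h2
    apply hπ (Equiv.swap i j a)
    simp only [Equiv.Perm.mul_apply] at h2
    have := congrArg (Equiv.swap i j) h2
    simpa using this
  · push Not at h
    have := hπ a
    rw [Equiv.Perm.mul_apply, Equiv.swap_apply_def]
    split_ifs with h1 h2
    · rw [h1]; exact h.2
    · rw [h2]; exact h.1
    · exact this

theorem Phi_vals {n : ℕ} (i j : Fin n) (hij : (j : ℕ) = i + 1) (π : Equiv.Perm (Fin n))
    (hπ : π ∈ derangementSet n) (hX : ¬ (π i = j ∧ π j = i)) :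
    (Phi i j π j < Phi i j π i ↔ π i < π j) ∧ ¬ (Phi i j π i = j ∧ Phi i j π j = i) := by
  rw [mem_der] at hπ
  have hi := hπ i
  have hj := hπ j
  have hne : π i ≠ π j := fun h => by have := π.injective h; omega
  unfold Phi
  split_ifs with h
  · simp only [Equiv.Perm.mul_apply, Equiv.swap_apply_left, Equiv.swap_apply_right]
    rcases h with h | h
    · have : π j ≠ i := fun h' => hX ⟨h, h'⟩
      rw [h, Equiv.swap_apply_of_ne_of_ne this hj, Equiv.swap_apply_right]
      constructor <;> simp only [Fin.lt_def, Fin.ext_iff, ne_eq] at * <;> omega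
    · have : π i ≠ j := fun h' => hX ⟨h', h⟩
      rw [h, Equiv.swap_apply_of_ne_of_ne hi this, Equiv.swap_apply_left]
      constructor <;> simp only [Fin.lt_def, Fin.ext_iff, ne_eq] at * <;> omega
  · simp only [Equiv.Perm.mul_apply, Equiv.swap_apply_left, Equiv.swap_apply_right]
    tauto

theorem card_desc (n : ℕ) (i j : Fin (n+2)) (hij : (j : ℕ) = i + 1) :
    2 * ((derangementSet (n+2)).filter fun π => π j < π i).card =
      numDerangements (n+2) + numDerangements n := by
  have hne : i ≠ j := fun h => by subst h; omega
  have hlt : i < j := by rw [Fin.lt_def]; omega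
  have hinj : ∀ π : Equiv.Perm (Fin (n+2)), π i ≠ π j := fun π h => hne (π.injective h)
  rw [← card_X n i j hne, ← card_der]
  have hA := Finset.card_filter_add_card_filter_not (s := derangementSet (n+2))
    (fun π => π j < π i)
  have hB := Finset.card_filter_add_card_filter_not
    (s := (derangementSet (n+2)).filter fun π => π j < π i) (fun π => π i = j ∧ π j = i)
  have hX : (((derangementSet (n+2)).filter fun π => π j < π i).filter
      fun π => π i = j ∧ π j = i) = (derangementSet (n+2)).filter fun π => π i = j ∧ π j = i := by
    ext π
    simp only [mem_filter]
    constructor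
    · rintro ⟨⟨a, b⟩, c⟩; exact ⟨a, c⟩
    · rintro ⟨a, c⟩; exact ⟨⟨a, by rw [c.1, c.2]; exact hlt⟩, c⟩
  have hC : (((derangementSet (n+2)).filter fun π => π j < π i).filter
      fun π => ¬ (π i = j ∧ π j = i)).card =
      ((derangementSet (n+2)).filter fun π => ¬ π j < π i).card := by
    refine Finset.card_bij' (fun π _ => Phi i j π) (fun π _ => Phi i j π) ?_ ?_ ?_ ?_
    · intro π hπ
      simp only [mem_filter] at hπ ⊢
      obtain ⟨⟨a, b⟩, c⟩ := hπ
      refine ⟨Phi_mem i j π a, ?_⟩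
      rw [(Phi_vals i j hij π a c).1]
      exact b.not_gt
    · intro π hπ
      simp only [mem_filter] at hπ ⊢
      obtain ⟨a, b⟩ := hπ
      have c : ¬ (π i = j ∧ π j = i) := fun c => b (by rw [c.1, c.2]; exact hlt)
      have := Phi_vals i j hij π a c
      refine ⟨⟨Phi_mem i j π a, this.1.2 ?_⟩, this.2⟩
      exact lt_of_le_of_ne (not_lt.1 b) (hinj π)
    · intro π hπ
      simp only [mem_filter] at hπ
      exact Phi_Phi i j π hπ.1.1
    · intro π hπ
      simp only [mem_filter] at hπ
      exact Phi_Phi i j π hπ.1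
  rw [hX] at hB
  omega

theorem descents_eq_s13 {m : ℕ} (π : Equiv.Perm (Fin (m+1))) :
    descents π = ∑ i : Fin m, if π i.succ < π i.castSucc then 1 else 0 := by
  unfold descents
  rw [Finset.card_filter, Fin.sum_univ_castSucc]
  simp only [Fin.val_last, lt_irrefl, IsEmpty.exists_iff, if_false, add_zero]
  refine Finset.sum_congr rfl fun i _ => ?_
  have : (∃ h : (i.castSucc : ℕ) + 1 < m + 1, π ⟨(i.castSucc : ℕ) + 1, h⟩ < π i.castSucc) ↔
      π i.succ < π i.castSucc :=
    ⟨fun ⟨_, h⟩ => h, fun h => ⟨by have := i.2; simp, h⟩⟩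
  simp only [this]

theorem descents_le {m : ℕ} (π : Equiv.Perm (Fin (m+1))) : descents π ≤ m := by
  rw [descents_eq_s13]
  calc _ ≤ ∑ i : Fin m, 1 := Finset.sum_le_sum fun i _ => by split_ifs <;> simp
    _ = m := by simp

theorem sum_der (m N : ℕ) (hN : m < N) :
    ∑ k ∈ Finset.range N, k * derDesNat (m+1) k = ∑ π ∈ derangementSet (m+1), descents π := by
  rw [← Finset.sum_fiberwise_of_maps_to (s := derangementSet (m+1)) (t := Finset.range N)
    (g := descents) (fun π _ => by have := descents_le π; simp; omega)]
  refine Finset.sum_congr rfl fun k _ => ?_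
  rw [Finset.sum_congr rfl (g := fun _ => k) (fun π hπ => (mem_filter.1 hπ).2)]
  simp [derDesNat, mul_comm]

theorem two_sum (m : ℕ) : 2 * ∑ π ∈ derangementSet (m+2), descents π =
    (m+1) * (numDerangements (m+2) + numDerangements m) := by
  simp only [descents_eq_s13]
  rw [Finset.sum_comm, Finset.mul_sum]
  simp only [← Finset.card_filter]
  rw [Finset.sum_congr rfl (fun i _ => card_desc m i.castSucc i.succ (by simp))]
  simp

/-- `Σ_k k·D_{n,k} = (n-1)²·d_{n-2} + (n-1)·Σ_k k·D_{n-1,k}`. -/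
theorem sum_descents_derangements_recurrence (n : ℕ) (hn : 2 ≤ n) :
    ∑ k ∈ Finset.range n, k * derDesNat n k =
      (n - 1) ^ 2 * (derangementSet (n - 2)).card +
        (n - 1) * ∑ k ∈ Finset.range n, k * derDesNat (n - 1) k := by
  obtain ⟨m, rfl⟩ : ∃ m, n = m + 2 := ⟨n - 2, by omega⟩
  simp only [show m + 2 - 1 = m + 1 from rfl]
  rw [sum_der (m+1) (m+2) (by omega), sum_der m (m+2) (by omega), card_der, Nat.add_sub_cancel]
  have h2 := two_sum m
  rw [numDerangements_add_two] at h2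
  rcases m with _ | m
  · have h0 : ∑ π ∈ derangementSet (0+1), descents π = 0 :=
      Finset.sum_eq_zero fun π _ => by have := descents_le π; omega
    rw [h0]
    simp at h2 ⊢
    omega
  · have h1 := two_sum m
    have h3 := numDerangements_add_two m
    change ∑ π ∈ derangementSet (m + 1 + 2), descents π =
        (m + 2) ^ 2 * numDerangements (m + 1) +
          (m + 2) * ∑ π ∈ derangementSet (m + 2), descents π
    change _ = (m + 2) * ((m + 2) * (numDerangements (m + 1) + numDerangements (m + 2)) +
      numDerangements (m + 1)) at h2
    generalize ∑ π ∈ derangementSet (m + 1 + 2), descents π = A at *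
    generalize ∑ π ∈ derangementSet (m + 2), descents π = B at *
    apply Nat.eq_of_mul_eq_mul_left two_pos
    zify at *
    linear_combination h2 - (m + 2) * h1 + (m + 2) * h3
end
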